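/- Let k ∈ {1,…,L} and let Γ* be a top-k classifier with respect to p. Then for every set-valued classifier Γ satisfying |Γ(x)| ≤ k for μ-almost every x, one has error(Γ*) ≤ error(Γ); that is, the top-k classifier minimizes the error rate P(Y ∉ Γ(X)) among all set-valued classifiers whose point-wise size is at most k. -/

import Mathlib

open MeasureTheory Finset

/-!
At each point the least selected score is a nonnegative threshold separating the selected labels
from the others. Hence exchanging selected labels for at most as many unselected ones cannot
increase the captured mass, and integrating this pointwise inequality compares the error rates.
-/

/-- The selections a top-`k` classifier may make: every score inside `S` is at least every score
outside `S`. Ties may be broken arbitrarily, and `k` is left to be read off as `#S`. -/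
def IsTopSet {ι M : Type*} [LE M] (q : ι → M) (S : Finset ι) : Prop :=
  ∀ i ∈ S, ∀ j, j ∉ S → q j ≤ q i

section FiniteSums

variable {ι M : Type*} [AddCommMonoid M] {q : ι → M} {S T : Finset ι}

theorem sum_le_sum_of_threshold [PartialOrder M] [IsOrderedCancelAddMonoid M] {c : M}
    (hc : 0 ≤ c) (hin : ∀ i ∈ S, c ≤ q i) (hout : ∀ j, j ∉ S → q j ≤ c) (hcard : #T ≤ #S) :
    ∑ i ∈ T, q i ≤ ∑ i ∈ S, q i := by
  classical
  rw [← sum_sdiff_le_sum_sdiff]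
  calc ∑ i ∈ T \ S, q i
      ≤ #(T \ S) • c := sum_le_card_nsmul _ _ _ fun j hj => hout j (mem_sdiff.1 hj).2
    _ ≤ #(S \ T) • c := nsmul_le_nsmul_left hc (card_sdiff_le_card_sdiff_iff.2 hcard)
    _ ≤ ∑ i ∈ S \ T, q i := card_nsmul_le_sum _ _ _ fun i hi => hin i (mem_sdiff.1 hi).1

theorem IsTopSet.sum_le_sum [LinearOrder M] [IsOrderedCancelAddMonoid M]
    (hS : IsTopSet q S) (hq : ∀ i ∈ S, 0 ≤ q i) (hcard : #T ≤ #S) :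
    ∑ i ∈ T, q i ≤ ∑ i ∈ S, q i := by
  rcases S.eq_empty_or_nonempty with rfl | hne
  · rw [card_eq_zero.1 (Nat.le_zero.1 hcard)]
  · obtain ⟨m, hm, hmin⟩ := S.exists_min_image q hne
    exact sum_le_sum_of_threshold (hq m hm) hmin (hS m hm) hcard

end FiniteSums

section Integration

variable {α ι : Type*} [MeasurableSpace α] {μ : Measure α}

theorem integrable_sum_mem [Finite ι] {E : Type*} [NormedAddCommGroup E] {p : α → ι → E}
    {Γ : α → Finset ι} (hp : ∀ i, Integrable (p · i) μ) (hΓ : ∀ i, MeasurableSet {x | i ∈ Γ x}) :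
    Integrable (fun x => ∑ i ∈ Γ x, p x i) μ := by
  classical
  cases nonempty_fintype ι
  have sum_eq (x : α) : ∑ i ∈ Γ x, p x i = ∑ i, {y | i ∈ Γ y}.indicator (p · i) x := by
    simp [Set.indicator_apply]
  simp only [sum_eq]
  exact integrable_finsetSum _ fun i _ => (hp i).indicator (hΓ i)

theorem integrable_apply_of_mem_stdSimplex [Fintype ι] [IsFiniteMeasure μ] {p : α → ι → ℝ}
    (hp : AEMeasurable p μ) (hmem : ∀ᵐ x ∂μ, p x ∈ stdSimplex ℝ ι) (i : ι) :
    Integrable (p · i) μ :=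
  .of_mem_Icc 0 1 (aemeasurable_pi_iff.1 hp i) <|
    hmem.mono fun _ hx => mem_Icc_of_mem_stdSimplex hx i

theorem topK_minimizes_error_general [Finite ι] [IsFiniteMeasure μ] {p : α → ι → ℝ}
    {Γstar Γ : α → Finset ι} (hp : ∀ i, Integrable (p · i) μ)
    (hΓstar : ∀ i, MeasurableSet {x | i ∈ Γstar x}) (hΓ : ∀ i, MeasurableSet {x | i ∈ Γ x})
    (hnonneg : ∀ᵐ x ∂μ, ∀ i ∈ Γstar x, 0 ≤ p x i) (htop : ∀ᵐ x ∂μ, IsTopSet (p x) (Γstar x))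
    (hcard : ∀ᵐ x ∂μ, #(Γ x) ≤ #(Γstar x)) :
    ∫ x, (1 - ∑ i ∈ Γstar x, p x i) ∂μ ≤ ∫ x, (1 - ∑ i ∈ Γ x, p x i) ∂μ := by
  have integrable_error {Δ : α → Finset ι} (hΔ : ∀ i, MeasurableSet {x | i ∈ Δ x}) :
      Integrable (fun x => 1 - ∑ i ∈ Δ x, p x i) μ :=
    (integrable_const 1).sub (integrable_sum_mem hp hΔ)
  refine integral_mono_ae (integrable_error hΓstar) (integrable_error hΓ) ?_
  filter_upwards [hnonneg, htop, hcard] with x hx_nonneg hx_top hx_card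
  exact sub_le_sub_left (hx_top.sum_le_sum hx_nonneg hx_card) 1

end Integration

/-- the top-k classifier minimizes the error rate among all
set-valued classifiers whose point-wise size is at most k (μ-a.e.). -/
theorem topK_minimizes_error
    {𝒳 : Type*} [m𝒳 : MeasurableSpace 𝒳] (μ : Measure 𝒳) [IsProbabilityMeasure μ]
    (L : ℕ) (hL : 1 ≤ L)
    (p : 𝒳 → Fin L → ℝ) (hp : Measurable p)
    (hp0 : ∀ x ℓ, 0 ≤ p x ℓ) (hpsum : ∀ x, ∑ ℓ, p x ℓ = 1)
    (k : ℕ) (hk1 : 1 ≤ k) (hkL : k ≤ L)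
    (Γstar : 𝒳 → Finset (Fin L))
    (hΓstarMeas : @Measurable 𝒳 (Finset (Fin L)) m𝒳 ⊤ Γstar)
    (hΓstarCard : ∀ x, (Γstar x).card = k)
    (hΓstarTop : ∀ x, ∀ ℓ ∈ Γstar x, ∀ m, m ∉ Γstar x → p x m ≤ p x ℓ)
    (Γ : 𝒳 → Finset (Fin L))
    (hΓMeas : @Measurable 𝒳 (Finset (Fin L)) m𝒳 ⊤ Γ)
    (hΓCard : ∀ᵐ x ∂μ, (Γ x).card ≤ k) :
    ∫ x, (1 - ∑ ℓ ∈ Γstar x, p x ℓ) ∂μ ≤ ∫ x, (1 - ∑ ℓ ∈ Γ x, p x ℓ) ∂μ := by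
  have hp_simplex : ∀ᵐ x ∂μ, p x ∈ stdSimplex ℝ (Fin L) := ae_of_all _ fun x => ⟨hp0 x, hpsum x⟩
  exact topK_minimizes_error_general
    (integrable_apply_of_mem_stdSimplex hp.aemeasurable hp_simplex)
    (fun ℓ => hΓstarMeas (t := {A | ℓ ∈ A}) trivial) (fun ℓ => hΓMeas (t := {A | ℓ ∈ A}) trivial)
    (ae_of_all _ fun x i _ => hp0 x i) (ae_of_all _ hΓstarTop)
    (hΓCard.mono fun x hx => hx.trans_eq (hΓstarCard x).symm)
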